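/- The map B̄ : H^{n+1}(A,A*) → H^n(A,A*) defined on cocycles by B̄(f)(a₁ ⊗ ⋯ ⊗ aₙ)(a₀) = Σ_{i=0}^{n} (−1)^{ni} f(a_i ⊗ ⋯ ⊗ aₙ ⊗ a₀ ⊗ ⋯ ⊗ a_{i−1})(1) is well-defined on cohomology, i.e., it sends cocycles to cocycles and coboundaries to coboundaries. -/

import Mathlib

section Cochains

variable {k : Type} [CommRing k] {A : Type} [Ring A] [Algebra k A]
variable {W : Type} [AddCommGroup W] [Module k W]

/-- The tuple obtained from `a : Fin (n+1) → A` by multiplying entries `i` and `i+1`. -/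
def mergeT {n : ℕ} (a : Fin (n+1) → A) (i : Fin n) : Fin n → A := fun j =>
  if (j : ℕ) < (i : ℕ) then a (Fin.castSucc j)
  else if (j : ℕ) = (i : ℕ) then a (Fin.castSucc j) * a (Fin.succ j)
  else a (Fin.succ j)

/-- The standard Hochschild coboundary formula for a cochain with values in a
bimodule `W` whose left and right `A`-actions are `la` and `ra`. -/
def hdG (la : A → W → W) (ra : A → W → W) {n : ℕ}
    (f : (Fin n → A) → W) (a : Fin (n+1) → A) : W :=
  la (a 0) (f (Fin.tail a))
    + (∑ i : Fin n, ((-1 : ℤ)^((i : ℕ)+1)) • f (mergeT a i))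
    + ((-1 : ℤ)^(n+1)) • ra (a (Fin.last n)) (f (Fin.init a))

/-- The left action of `A` on `A* = Hom_k(A,k)`: `(a·f)(x) = f(xa)`. -/
noncomputable def laD (a : A) (f : Module.Dual k A) : Module.Dual k A :=
  f ∘ₗ LinearMap.mulRight k a

/-- The right action of `A` on `A* = Hom_k(A,k)`: `(f·b)(x) = f(bx)`. -/
noncomputable def raD (b : A) (f : Module.Dual k A) : Module.Dual k A :=
  f ∘ₗ LinearMap.mulLeft k b

/-- The Hochschild coboundary on cochains with values in `A*`, with the canonical
bimodule structure `(afb)(x) = f(bxa)`. -/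
noncomputable def hdD {n : ℕ} (f : (Fin n → A) → Module.Dual k A)
    (a : Fin (n+1) → A) : Module.Dual k A :=
  hdG laD raD f a

/-- Being a Hochschild coboundary, for cochains with values in a bimodule `W`
with actions `la`, `ra` (in degree `0` this means being zero). -/
def IsCoboundG (la : A → W → W) (ra : A → W → W) :
    (n : ℕ) → ((Fin n → A) → W) → Prop
  | 0, F => ∀ a, F a = 0
  | m+1, F => ∃ g : MultilinearMap k (fun _ : Fin m => A) W,
      ∀ a, F a = hdG la ra (⇑g) a

/-- Being a Hochschild coboundary for `A*`-valued cochains. -/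
noncomputable def IsCoboundD : (n : ℕ) → ((Fin n → A) → Module.Dual k A) → Prop :=
  IsCoboundG (k := k) (A := A) (laD (k := k) (A := A)) (raD (k := k) (A := A))

/-- The tuple `(a_i, …, aₙ, a₀, …, a_{i-1})` built from `a₀`-placeholder and `a`,
with the placeholder slot left as `1`. -/
noncomputable def cycTuple {n : ℕ} (a : Fin n → A) (i : Fin (n+1)) : Fin (n+1) → A :=
  fun j => if h : j + i = 0 then 1 else a ((j + i).pred h)

/-- The operator `B̄ : Hom(A^{⊗(n+1)}, A*) → Hom(A^{⊗ n}, A*)`,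
`B̄(f)(a₁ ⊗ ⋯ ⊗ aₙ)(a₀) = ∑ (−1)^{ni} f(a_i ⊗ ⋯ ⊗ aₙ ⊗ a₀ ⊗ ⋯ ⊗ a_{i-1})(1)`. -/
noncomputable def Bbar {n : ℕ}
    (f : MultilinearMap k (fun _ : Fin (n+1) => A) (Module.Dual k A))
    (a : Fin n → A) : Module.Dual k A :=
  ∑ i : Fin (n+1), ((-1 : ℤ)^(n * (i : ℕ))) •
    ((Module.Dual.eval k A (1 : A)) ∘ₗ (f.toLinearMap (cycTuple a i) (-i)))

end Cochains

section Aux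

variable {k : Type} [CommRing k] {A : Type} [Ring A] [Algebra k A]

/-- Cyclic rotation of a tuple. -/
def rotT {n : ℕ} (c : Fin (n+1) → A) (i : Fin (n+1)) : Fin (n+1) → A := fun j => c (j + i)

/-- All cyclic faces of a tuple, including the last (wrap-around) one. -/
def faceT {n : ℕ} (c : Fin (n+2) → A) (p : Fin (n+2)) : Fin (n+1) → A := fun j =>
  if (p : ℕ) = n + 1 then
    (if (j : ℕ) = 0 then c (Fin.last (n+1)) * c 0 else c (Fin.castSucc j))
  else if (j : ℕ) < (p : ℕ) then c (Fin.castSucc j)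
  else if (j : ℕ) = (p : ℕ) then c (Fin.castSucc j) * c (Fin.succ j)
  else c (Fin.succ j)

lemma update_cycTuple {n : ℕ} (a : Fin n → A) (i : Fin (n+1)) (x : A) :
    Function.update (cycTuple a i) (-i) x = rotT (Fin.cons x a) i := by
  funext j
  by_cases h : j = -i
  · subst h
    simp [rotT]
  · have h' : j + i ≠ 0 := fun h0 => h (eq_neg_of_add_eq_zero_left h0)
    rw [Function.update_of_ne h]
    simp only [cycTuple, rotT, dif_neg h']
    conv_rhs => rw [← Fin.succ_pred (j + i) h']
    rw [Fin.cons_succ]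

lemma Bbar_apply {n : ℕ} (f : MultilinearMap k (fun _ : Fin (n+1) => A) (Module.Dual k A))
    (a : Fin n → A) (x : A) :
    Bbar f a x = ∑ i : Fin (n+1), ((-1 : ℤ)^(n * (i : ℕ))) • f (rotT (Fin.cons x a) i) 1 := by
  simp only [Bbar, LinearMap.sum_apply, LinearMap.smul_apply, LinearMap.comp_apply,
    MultilinearMap.toLinearMap_apply, update_cycTuple, Module.Dual.eval_apply]

/-- `Bbar f` as a multilinear map. -/
noncomputable def BbarM {n : ℕ}
    (f : MultilinearMap k (fun _ : Fin (n+1) => A) (Module.Dual k A)) :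
    MultilinearMap k (fun _ : Fin n => A) (Module.Dual k A) :=
  MultilinearMap.curryRight (M := fun _ : Fin (n+1) => A) (∑ i : Fin (n+1), ((-1 : ℤ)^(n * (i : ℕ))) •
    (((Module.Dual.eval k A (1 : A)).compMultilinearMap f).domDomCongr (Equiv.addRight (i - 1))))

lemma BbarM_apply {n : ℕ} (f : MultilinearMap k (fun _ : Fin (n+1) => A) (Module.Dual k A))
    (a : Fin n → A) : BbarM f a = Bbar f a := by
  ext x
  rw [Bbar_apply]
  simp only [BbarM, MultilinearMap.curryRight_apply, MultilinearMap.sum_apply,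
    MultilinearMap.smul_apply, MultilinearMap.domDomCongr_apply,
    LinearMap.compMultilinearMap_apply, Module.Dual.eval_apply]
  refine Finset.sum_congr rfl fun i _ => ?_
  congr 3
  funext j
  simp only [rotT, Equiv.coe_addRight]
  rw [← add_sub_assoc]
  generalize j + i = q
  induction q using Fin.cases with
  | zero =>
    have : (0 - 1 : Fin (n+1)) = Fin.last n := by
      rw [sub_eq_iff_eq_add]; simp
    rw [this]; simp
  | succ q =>
    have : (q.succ - 1 : Fin (n+1)) = q.castSucc := by
      rw [sub_eq_iff_eq_add]; simp
    rw [this]; simp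

lemma rot_face {n : ℕ} (c : Fin (n+2) → A) (p : Fin (n+2)) (i : Fin (n+1))
    (j : Fin (n+2)) (l : Fin (n+1))
    (h : ((i : ℕ) ≤ p ∧ ¬ ((p : ℕ) = n+1 ∧ (i : ℕ) = 0) ∧ (j : ℕ) = i ∧ (l : ℕ) = p - i) ∨
      ((p : ℕ) < i ∧ (j : ℕ) = i + 1 ∧ (l : ℕ) = p + n + 1 - i) ∨
      ((p : ℕ) = n+1 ∧ (i : ℕ) = 0 ∧ (j : ℕ) = n+1 ∧ (l : ℕ) = 0)) :
    rotT (faceT c p) i = mergeT (rotT c j) l := by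
  obtain ⟨C, hC⟩ : ∃ C : ℕ → A, ∀ x, c x = C x :=
    ⟨fun m => if h : m < n + 2 then c ⟨m, h⟩ else 0, fun x => by simp⟩
  funext q
  have e1 := Fin.val_add_eq_ite q i
  have e2 := Fin.val_add_eq_ite q.castSucc j
  have e3 := Fin.val_add_eq_ite q.succ j
  simp only [rotT, faceT, mergeT, hC, Fin.val_castSucc, Fin.val_succ, Fin.val_last, Fin.val_zero] at *
  have := q.2; have := i.2; have := p.2; have := j.2; have := l.2
  rw [e1, e2, e3]
  clear e1 e2 e3
  rcases h with h | h | h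
  all_goals
    split_ifs <;> first | omega | (congr 1; omega) | (congr 1 <;> congr 1 <;> omega)

lemma negOnePow_aux {a b : ℕ} (h : a % 2 = b % 2) : (-1 : ℤ)^a = (-1)^b := by
  rw [neg_one_pow_eq_pow_mod_two, h, ← neg_one_pow_eq_pow_mod_two]

lemma sum_faces {n : ℕ} (Φ : (Fin (n+1) → A) → k) (c : Fin (n+2) → A) :
    ∑ p : Fin (n+2), ((-1 : ℤ)^(p : ℕ)) • ∑ i : Fin (n+1),
      ((-1 : ℤ)^(n * (i : ℕ))) • Φ (rotT (faceT c p) i) =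
    ∑ j : Fin (n+2), ((-1 : ℤ)^((n+1) * (j : ℕ))) • ∑ l : Fin (n+1),
      ((-1 : ℤ)^(l : ℕ)) • Φ (mergeT (rotT c j) l) := by
  simp only [Finset.smul_sum, smul_smul, ← pow_add]
  rw [← Finset.sum_product', ← Finset.sum_product']
  let F : Fin (n+2) × Fin (n+1) → Fin (n+2) × Fin (n+1) := fun x =>
    if h1 : (x.1 : ℕ) < x.2 then (⟨x.2 + 1, by omega⟩, ⟨x.1 + n + 1 - x.2, by omega⟩)
    else if h2 : (x.1 : ℕ) = n + 1 ∧ (x.2 : ℕ) = 0 then (⟨n+1, by omega⟩, ⟨0, by omega⟩)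
    else (⟨x.2, by omega⟩, ⟨x.1 - x.2, by omega⟩)
  have hF : ∀ x : Fin (n+2) × Fin (n+1),
      (((x.2 : ℕ) ≤ x.1 ∧ ¬ ((x.1 : ℕ) = n+1 ∧ (x.2 : ℕ) = 0) ∧ ((F x).1 : ℕ) = x.2 ∧
        ((F x).2 : ℕ) = x.1 - x.2) ∨
      ((x.1 : ℕ) < x.2 ∧ ((F x).1 : ℕ) = x.2 + 1 ∧ ((F x).2 : ℕ) = x.1 + n + 1 - x.2) ∨
      ((x.1 : ℕ) = n+1 ∧ (x.2 : ℕ) = 0 ∧ ((F x).1 : ℕ) = n+1 ∧ ((F x).2 : ℕ) = 0)) := by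
    intro x
    by_cases h1 : (x.1 : ℕ) < x.2
    · refine Or.inr (Or.inl ⟨h1, ?_, ?_⟩) <;> simp only [F, dif_pos h1]
    · by_cases h2 : (x.1 : ℕ) = n + 1 ∧ (x.2 : ℕ) = 0
      · refine Or.inr (Or.inr ⟨h2.1, h2.2, ?_, ?_⟩) <;> simp only [F, dif_neg h1, dif_pos h2]
      · refine Or.inl ⟨by omega, h2, ?_, ?_⟩ <;> simp only [F, dif_neg h1, dif_neg h2]
  have hinj : Function.Injective F := by
    intro x y hxy
    have hx := hF x
    have hy := hF y
    rw [hxy] at hx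
    have := x.1.2; have := x.2.2; have := y.1.2; have := y.2.2
    ext <;> omega
  have hbij : Function.Bijective F := Finite.injective_iff_bijective.1 hinj
  refine Fintype.sum_bijective F hbij _ _ fun x => ?_
  have hx := hF x
  rw [rot_face c x.1 x.2 (F x).1 (F x).2 hx]
  congr 1
  apply negOnePow_aux
  have := x.1.2; have := x.2.2
  generalize ((F x).1 : ℕ) = u at *
  generalize ((F x).2 : ℕ) = v at *
  generalize (x.1 : ℕ) = p at *
  generalize (x.2 : ℕ) = i at *
  rcases hx with ⟨h1, h2, rfl, rfl⟩ | ⟨h1, rfl, rfl⟩ | ⟨rfl, rfl, rfl, rfl⟩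
  · have : (n+1) * u = n * u + u := by ring
    omega
  · have : (n+1) * (i+1) = n * i + n + i + 1 := by ring
    omega
  · have h := Nat.even_mul_succ_self n
    have : (n+1) * (n+1) = n * (n+1) + n + 1 := by ring
    rw [Nat.even_iff] at h
    omega

lemma face_zero {n : ℕ} (x : A) (a : Fin (n+1) → A) :
    faceT (Fin.cons x a) 0 = Fin.cons (x * a 0) (Fin.tail a) := by
  funext j
  induction j using Fin.cases with
  | zero => simp [faceT]
  | succ j => simp [faceT, Fin.tail]

lemma face_mid {n : ℕ} (x : A) (a : Fin (n+1) → A) (i : Fin n) :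
    faceT (Fin.cons x a) i.castSucc.succ = Fin.cons x (mergeT a i) := by
  funext j
  have := i.2
  have h : ¬ ((i : ℕ) = n) := by omega
  induction j using Fin.cases with
  | zero => simp [faceT, h]
  | succ j => simp [faceT, h, mergeT, ← Fin.succ_castSucc]

lemma face_last {n : ℕ} (x : A) (a : Fin (n+1) → A) :
    faceT (Fin.cons x a) (Fin.last n).succ = Fin.cons (a (Fin.last n) * x) (Fin.init a) := by
  funext j
  induction j using Fin.cases with
  | zero => simp [faceT, ← Fin.succ_last]
  | succ j => simp [faceT, Fin.init, ← Fin.succ_castSucc]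

lemma hdD_apply {n : ℕ} (f : (Fin n → A) → Module.Dual k A) (a : Fin (n+1) → A) (x : A) :
    hdD f a x = f (Fin.tail a) (x * a 0)
      + (∑ i : Fin n, ((-1 : ℤ)^((i : ℕ)+1)) • f (mergeT a i) x)
      + ((-1 : ℤ)^(n+1)) • f (Fin.init a) (a (Fin.last n) * x) := by
  simp [hdD, hdG, laD, raD, LinearMap.sum_apply]

lemma hdD_face {n : ℕ} (f : (Fin n → A) → Module.Dual k A) (G : (Fin (n+1) → A) → k)
    (hG : ∀ a x, f a x = G (Fin.cons x a)) (a : Fin (n+1) → A) (x : A) :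
    hdD f a x = ∑ p : Fin (n+2), ((-1 : ℤ)^(p : ℕ)) • G (faceT (Fin.cons x a) p) := by
  rw [hdD_apply, Fin.sum_univ_succ, Fin.sum_univ_castSucc]
  simp only [face_zero, face_mid, face_last, hG]
  simp [add_assoc]

/-- The main identity: `d B̄ = - B̄ d`. -/
lemma hdD_Bbar {n : ℕ} (f : MultilinearMap k (fun _ : Fin (n+1) => A) (Module.Dual k A))
    (a : Fin (n+1) → A) (x : A) :
    hdD (Bbar f) a x = - ∑ j : Fin (n+2), ((-1 : ℤ)^((n+1) * (j : ℕ))) •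
      hdD (⇑f) (rotT (Fin.cons x a) j) 1 := by
  rw [hdD_face (Bbar f) (fun c => ∑ i : Fin (n+1), ((-1 : ℤ)^(n * (i : ℕ))) • f (rotT c i) 1)
    (fun a x => Bbar_apply f a x), sum_faces (fun c => f c 1)]
  generalize (Fin.cons x a : Fin (n+2) → A) = c
  simp only [hdD_apply, one_mul, mul_one, smul_add, Finset.sum_add_distrib]
  have key : ∑ j : Fin (n+2), ((-1 : ℤ)^((n+1) * (j : ℕ))) •
        ((-1 : ℤ)^(n+1+1)) • f (Fin.init (rotT c j)) (rotT c j (Fin.last (n+1))) =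
      - ∑ j : Fin (n+2), ((-1 : ℤ)^((n+1) * (j : ℕ))) •
        f (Fin.tail (rotT c j)) (rotT c j 0) := by
    rw [← Finset.sum_neg_distrib]
    symm
    refine Fintype.sum_equiv (Equiv.addRight 1) _ _ fun j => ?_
    have e1 : Fin.init (rotT c (j + 1)) = Fin.tail (rotT c j) := by
      funext q
      simp only [Fin.init, Fin.tail, rotT]
      congr 1
      rw [← Fin.coeSucc_eq_succ]
      rw [add_comm j 1]
      exact (add_assoc q.castSucc 1 j).symm
    have e2 : rotT c (j + 1) (Fin.last (n+1)) = rotT c j 0 := by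
      simp only [rotT]
      congr 1
      rw [add_comm j 1, ← add_assoc, Fin.last_add_one]
    simp only [Equiv.coe_addRight, e1, e2, smul_smul]
    rw [← neg_smul]
    congr 1
    rw [← pow_add, neg_eq_neg_one_mul, ← pow_succ']
    apply negOnePow_aux
    rw [Fin.val_add_one]
    have h := Nat.even_mul_succ_self (n+1)
    rw [Nat.even_iff] at h
    split_ifs with hj
    · subst hj
      rw [Fin.val_last]
      have : (n+1) * (n+1+1) = (n+1)*(n+1) + n+1 := by ring
      omega
    · have : (n+1) * ((j:ℕ)+1) = (n+1)*j + n+1 := by ring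
      omega
  rw [key]
  simp only [pow_succ, mul_neg, mul_one, neg_smul, Finset.sum_neg_distrib, smul_neg]
  abel

end Aux

/-- The map `B̄ : H^{n+1}(A,A*) → H^n(A,A*)` defined on cocycles by
`B̄(f)(a₁ ⊗ ⋯ ⊗ aₙ)(a₀) = Σ_{i=0}^{n} (−1)^{ni} f(a_i ⊗ ⋯ ⊗ aₙ ⊗ a₀ ⊗ ⋯ ⊗ a_{i−1})(1)`
is well defined on cohomology: it sends cocycles to cocycles (and `B̄ f` is again a
multilinear cochain) and coboundaries to coboundaries. -/
theorem statement3 (k : Type) [CommRing k] (A : Type) [Ring A] [Algebra k A] (n : ℕ)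
    (f : MultilinearMap k (fun _ : Fin (n+1) => A) (Module.Dual k A))
    (hf : ∀ a, hdD (⇑f) a = 0) :
    (∃ g : MultilinearMap k (fun _ : Fin n => A) (Module.Dual k A),
        (∀ a, ⇑g a = Bbar f a) ∧ ∀ a, hdD (⇑g) a = 0) ∧
    (∀ h : MultilinearMap k (fun _ : Fin n => A) (Module.Dual k A),
        (∀ a, ⇑f a = hdD (⇑h) a) → IsCoboundD n (Bbar f)) := by
  refine ⟨⟨BbarM f, BbarM_apply f, fun a => ?_⟩, fun h hh => ?_⟩
  · have e : ⇑(BbarM f) = Bbar f := funext (BbarM_apply f)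
    ext x
    rw [e, hdD_Bbar]
    simp [hf]
  · cases n with
    | zero =>
      intro a
      ext x
      rw [Bbar_apply]
      simp only [hh, hdD_apply]
      have e : ∀ u v : Fin 0 → A, u = v := fun u v => Subsingleton.elim _ _
      simp [e (Fin.init (rotT (Fin.cons x a : Fin (0+1) → A) 0))
        (Fin.tail (rotT (Fin.cons x a : Fin (0+1) → A) 0))]
    | succ m =>
      refine ⟨-BbarM h, fun a => ?_⟩
      have e : ⇑(BbarM h) = Bbar h := funext (BbarM_apply h)
      have e2 : hdG laD raD (⇑(-BbarM h)) a = - hdD (Bbar h) a := by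
        rw [← e]
        change hdD _ a = _
        ext x
        rw [LinearMap.neg_apply, hdD_apply, hdD_apply]
        simp only [MultilinearMap.neg_apply, LinearMap.neg_apply, smul_neg,
          Finset.sum_neg_distrib]
        abel
      rw [e2]
      ext x
      rw [LinearMap.neg_apply, hdD_Bbar, neg_neg, Bbar_apply]
      simp only [hh]
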